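/- Let λ be a partition of n with reciprocal Cauchy transform H, let φ(z) = z·H(1/z) (a formal power series with constant term 1), and let Φ(x,u) = (1−ux)·φ(x/(1−ux)). Then for all integers k₁,…,k_l ≥ 1, (−1)^l · k₁⋯k_l · Σ^λ_{k₁,…,k_l} = [z₁^{k₁+1}]⋯[z_l^{k_l+1}] [ ( ∏_{r=1}^l ∏_{j=0}^{k_r−1} Φ(z_r, j) ) · ∏_{1≤s<t≤l} ( (z_t−z_s)(z_t−z_s+(k_t−k_s) z_s z_t) ) / ( (z_t−z_s−k_s z_s z_t)(z_t−z_s+k_t z_s z_t) ) ], where the coefficients are extracted iteratively: the expression is expanded as a formal power series in z_l with coefficients rational functions of z₁,…,z_{l−1}, the coefficient of z_l^{k_l+1} is taken, and the procedure is repeated with respect to z_{l−1}, …, z₁ (this formula is obtained from the generalized Frobenius formula by the substitution z_r ↦ 1/z_r). -/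

import Mathlib

open scoped BigOperators

/-- For a partition `λ` of `n` and a multiset `k` of positive integers, the irreducible
character value `Tr ρ^λ(k)`, defined via Frobenius' character formula. -/
noncomputable def frobChar (n : ℕ) (lam : Fin n → ℕ) (k : Multiset ℕ) : ℤ :=
  MvPolynomial.coeff
    (Finsupp.equivFunOnFinite.symm fun i : Fin n => lam i + (n - 1 - (i : ℕ)))
    ((Multiset.map (fun m => ∑ i : Fin n, MvPolynomial.X i ^ m) k).prod *
      ∑ w : Equiv.Perm (Fin n),
        MvPolynomial.C ((Equiv.Perm.sign w : ℤ)) *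
          ∏ i : Fin n, MvPolynomial.X i ^ (n - 1 - ((w i : ℕ))))

/-- The normalized character of a conjugacy class, as a rational number:
`Σ^λ_{k₁,…,k_l} = (n)_{k₁+⋯+k_l} ⋅ χ^λ(π)` where `π` has cycle type
`(k₁,…,k_l,1^{n-k₁-⋯-k_l})`; it vanishes by convention when `k₁+⋯+k_l > n`. -/
noncomputable def SigmaChar (n : ℕ) (lam : Fin n → ℕ) (k : Multiset ℕ) : ℚ :=
  if k.sum ≤ n then
    (Nat.descFactorial n k.sum : ℚ) *
      (frobChar n lam (k + Multiset.replicate (n - k.sum) 1) : ℚ) /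
      (frobChar n lam (Multiset.replicate n 1) : ℚ)
  else 0

/-- The reciprocal Cauchy transform `H` of the partition `λ` of `n`, evaluated (in any
field) at `w`: `H(w) = (w+n) ⋅ ∏_{i=1}^n (w-λᵢ+i-1) / ∏_{i=1}^n (w-λᵢ+i)`. -/
noncomputable def Hof (n : ℕ) (lam : Fin n → ℕ) {F : Type} [Field F] (w : F) : F :=
  (w + (n : F)) * (∏ i : Fin n, (w - (lam i : F) + ((i : ℕ) : F))) /
    ∏ i : Fin n, (w - (lam i : F) + ((i : ℕ) : F) + 1)

/-- `φ(z) = z ⋅ H(1/z)`, evaluated in any field. -/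
noncomputable def phiOf (n : ℕ) (lam : Fin n → ℕ) {F : Type} [Field F] (w : F) : F :=
  w * Hof n lam w⁻¹

/-- `Φ(x,u) = (1-ux) ⋅ φ(x/(1-ux))`, evaluated in any field. -/
noncomputable def PhiOf (n : ℕ) (lam : Fin n → ℕ) {F : Type} [Field F] (x u : F) : F :=
  (1 - u * x) * phiOf n lam (x / (1 - u * x))

/-- Iterated Laurent series fields: level 0 is `ℚ`, level `l+1` is the field of formal
Laurent series over level `l`. -/
noncomputable def ItL : ℕ → (T : Type) × Field T
  | 0 => ⟨ℚ, inferInstance⟩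
  | l + 1 =>
    haveI := (ItL l).2
    ⟨LaurentSeries (ItL l).1, inferInstance⟩

/-- The underlying type of the `l`-th iterated Laurent series field. -/
abbrev ItLT (l : ℕ) : Type := (ItL l).1

noncomputable instance (l : ℕ) : Field (ItLT l) := (ItL l).2

/-- The variable `z_{r+1}` (for `0 ≤ r < l`), as an element of the `l`-th iterated
Laurent series field: it is the formal variable of the `(r+1)`-st level, so that
expansions at level `r+1` are formal (Laurent) series expansions in increasing powers of
`z_{r+1}` with coefficients functions of `z_1, …, z_r`. -/
noncomputable def wVar : (l : ℕ) → ℕ → ItLT l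
  | 0, _ => 0
  | l + 1, r =>
    if r = l then
      (show LaurentSeries (ItLT l) from HahnSeries.single (1 : ℤ) (1 : ItLT l))
    else
      (show LaurentSeries (ItLT l) from HahnSeries.C (wVar l r))

/-- Iterated coefficient extraction `[z₁^{k₁+1}] ⋯ [z_l^{k_l+1}]`: successively take the
coefficient of `z_j^{k_j+1}` in the expansion at level `j`, for `j = l, l-1, …, 1`
(`k r` stands for `k_{r+1}`). -/
noncomputable def extractPow : (l : ℕ) → (ℕ → ℕ) → ItLT l → ℚ
  | 0, _, x => x
  | l + 1, k, f => extractPow l k ((show LaurentSeries (ItLT l) from f).coeff ((k l : ℤ) + 1))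

/-!
Put `ν = λ + δ`. Seen as a function of `w = 1 / z₁`, the factor of the integrand that involves only
`z₁` is rational with simple poles at the nodes `ν i - n`, while the interactions of `z₁` with
`z₂, …, z_l` are power series in the latter whose coefficients are polynomials in `w`. Extracting
the coefficient in `z₁`, the last to be extracted, therefore amounts to computing a residue at
infinity, and yields a sum over `i` of the integrand specialised at `w = ν i - n`. There the
interactions turn the remaining integrand for `ν` into the one for `ν - k₁ e_i`.

On the side of characters, multiplying an alternant by the power sum `p_{k₁}` also replaces `ν` by
the sum over `i` of the `ν - k₁ e_i`. The two recursions differ by a weight, which is `-k₁` times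
the quotient of the dimensions attached to `ν - k₁ e_i` and to `ν`.
-/

lemma map_ringInverse {R S : Type*} [CommRing R] [CommRing S] (f : R →+* S) {x : R}
    (hx : IsUnit x) : f (Ring.inverse x) = Ring.inverse (f x) := by
  obtain ⟨u, rfl⟩ := hx
  exact (congrArg f (Ring.inverse_unit u)).trans
    (Ring.inverse_unit (Units.map f.toMonoidHom u)).symm

section LaurentMap

variable {R S : Type*} [CommRing R] [CommRing S]

/-- The ring homomorphism between Laurent series rings that applies `f` to every coefficient. -/
noncomputable def laurentMap (f : R →+* S) : LaurentSeries R →+* LaurentSeries S where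
  toFun x := x.map f
  map_zero' := by ext; simp
  map_one' := HahnSeries.map_one f.toMonoidWithZeroHom
  map_add' x y := by ext; simp
  map_mul' _ _ := HahnSeries.map_mul (f := (f : R →ₙ+* S))

lemma laurentMap_single (f : R →+* S) (m : ℤ) (r : R) :
    laurentMap f (HahnSeries.single m r) = HahnSeries.single m (f r) :=
  HahnSeries.map_single (f : ZeroHom R S)

lemma laurentMap_C (f : R →+* S) (r : R) :
    laurentMap f (HahnSeries.C r) = HahnSeries.C (f r) :=
  laurentMap_single f 0 r

lemma laurentSeries_coeff_C_mul (r : R) (x : LaurentSeries R) (m : ℤ) :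
    (HahnSeries.C r * x).coeff m = r * x.coeff m := by
  simp

lemma isUnit_one_sub_C_mul_single (r : R) :
    IsUnit (1 - HahnSeries.C r * HahnSeries.single (1 : ℤ) (1 : R)) := by
  have h : IsUnit (1 - PowerSeries.C r * PowerSeries.X : PowerSeries R) := by
    simp [PowerSeries.isUnit_iff_constantCoeff]
  simpa [HahnSeries.ofPowerSeries_C, HahnSeries.ofPowerSeries_X] using
    h.map (HahnSeries.ofPowerSeries ℤ R)

end LaurentMap

universe u v

/-- The ring of `l`-fold iterated Laurent series over `R`, bundled with its ring structure. -/
noncomputable def iterLaurentRing (R : Type u) [CommRing R] : ℕ → (T : Type u) × CommRing T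
  | 0 => ⟨R, inferInstance⟩
  | l + 1 =>
    letI := (iterLaurentRing R l).2
    ⟨LaurentSeries (iterLaurentRing R l).1, inferInstance⟩

/-- The ring `R((z₁))⋯((z_l))` of iterated Laurent series. It plays the role of `ItLT` over an
arbitrary base ring, which lets the innermost variable be specialised. -/
abbrev IterLaurent (R : Type u) [CommRing R] (l : ℕ) : Type u := (iterLaurentRing R l).1

noncomputable instance (R : Type u) [CommRing R] (l : ℕ) : CommRing (IterLaurent R l) :=
  (iterLaurentRing R l).2

namespace IterLaurent

variable {R : Type u} {S : Type v} [CommRing R] [CommRing S]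

/-- Elements of one level, as constant series on the next level. -/
noncomputable def lift (l : ℕ) : IterLaurent R l →+* IterLaurent R (l + 1) :=
  (HahnSeries.C : IterLaurent R l →+* LaurentSeries (IterLaurent R l))

variable (R) in
/-- The variable adjoined last. -/
noncomputable def lastVar (l : ℕ) : IterLaurent R (l + 1) :=
  (HahnSeries.single (1 : ℤ) 1 : LaurentSeries (IterLaurent R l))

/-- The embedding of the base ring. -/
noncomputable def C : (l : ℕ) → R →+* IterLaurent R l
  | 0 => RingHom.id R
  | l + 1 => (lift l).comp (C l)

variable (R) in
/-- The variable `z_{r+1}` of the ring of iterated Laurent series, for `r < l`; the junk value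
for `r ≥ l` is `0`. -/
noncomputable def X : (l : ℕ) → ℕ → IterLaurent R l
  | 0, _ => 0
  | l + 1, r => if r = l then lastVar R l else lift l (X l r)

/-- The iterated coefficient `[z₁^{k₁+1}] ⋯ [z_l^{k_l+1}]`, where `k r` stands for `k_{r+1}`. -/
noncomputable def extract : (l : ℕ) → (ℕ → ℕ) → IterLaurent R l → R
  | 0, _, x => x
  | l + 1, k, x =>
    extract l k ((show LaurentSeries (IterLaurent R l) from x).coeff ((k l : ℤ) + 1))

/-- The application of `f` to all coefficients of an iterated Laurent series. -/
noncomputable def map (f : R →+* S) : (l : ℕ) → IterLaurent R l →+* IterLaurent S l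
  | 0 => f
  | l + 1 => laurentMap (map f l)

/-- Adjoining one variable before `l` others amounts to adjoining `l + 1` variables. -/
noncomputable def flatten : (l : ℕ) → IterLaurent (LaurentSeries R) l →+* IterLaurent R (l + 1)
  | 0 => RingHom.id (LaurentSeries R)
  | l + 1 => laurentMap (flatten l)

/-- The comparison with the iterated Laurent series fields over `ℚ`. -/
noncomputable def toItL : (l : ℕ) → IterLaurent ℚ l →+* ItLT l
  | 0 => RingHom.id ℚ
  | l + 1 => (laurentMap (toItL l) : LaurentSeries (IterLaurent ℚ l) →+* LaurentSeries (ItLT l))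

lemma X_self (l : ℕ) : X R (l + 1) l = lastVar R l := if_pos rfl

lemma X_of_ne {l r : ℕ} (h : r ≠ l) :
    X R (l + 1) r = lift l (X R l r) := if_neg h

lemma map_lift (f : R →+* S) (l : ℕ) (x : IterLaurent R l) :
    map f (l + 1) (lift l x) = lift l (map f l x) :=
  laurentMap_C (map f l) x

lemma map_lastVar (f : R →+* S) (l : ℕ) : map f (l + 1) (lastVar R l) = lastVar S l :=
  (laurentMap_single (map f l) 1 1).trans (congrArg (HahnSeries.single (1 : ℤ)) (map_one _))

lemma map_C (f : R →+* S) (r : R) : ∀ l, map f l (C l r) = C l (f r)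
  | 0 => rfl
  | l + 1 => (map_lift f l _).trans (congrArg (lift l) (map_C f r l))

lemma map_X (f : R →+* S) (r : ℕ) : ∀ l, map f l (X R l r) = X S l r
  | 0 => map_zero f
  | l + 1 => by
    obtain rfl | h := eq_or_ne r l
    · rw [X_self, X_self, map_lastVar]
    · rw [X_of_ne h, X_of_ne h, map_lift, map_X f r l]

lemma flatten_lift (l : ℕ) (x : IterLaurent (LaurentSeries R) l) :
    flatten (l + 1) (lift l x) = lift (l + 1) (flatten l x) :=
  laurentMap_C (flatten l) x

lemma flatten_lastVar (l : ℕ) :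
    flatten (l + 1) (lastVar (LaurentSeries R) l) = lastVar R (l + 1) :=
  (laurentMap_single (flatten l) 1 1).trans (congrArg (HahnSeries.single (1 : ℤ)) (map_one _))

lemma flatten_C_single : ∀ l, flatten l (C l (HahnSeries.single (1 : ℤ) (1 : R))) = X R (l + 1) 0
  | 0 => (X_self 0).symm
  | l + 1 => by
    rw [X_of_ne l.succ_ne_zero.symm, ← flatten_C_single l]
    exact flatten_lift l _

lemma flatten_X (r : ℕ) : ∀ l, flatten l (X (LaurentSeries R) l r) = X R (l + 1) (r + 1)
  | 0 => (map_zero _).trans ((X_of_ne r.succ_ne_zero).trans (map_zero _)).symm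
  | l + 1 => by
    obtain rfl | h := eq_or_ne r l
    · rw [X_self, X_self, flatten_lastVar]
    · rw [X_of_ne h, X_of_ne (by omega), flatten_lift, flatten_X r l]

lemma toItL_X (r : ℕ) : ∀ l, toItL l (X ℚ l r) = wVar l r
  | 0 => rfl
  | l + 1 => by
    obtain rfl | h := eq_or_ne r l
    · rw [X_self]
      exact ((laurentMap_single (toItL r) 1 1).trans
        (congrArg (HahnSeries.single (1 : ℤ)) (map_one _))).trans (if_pos rfl).symm
    · rw [X_of_ne h]
      exact ((laurentMap_C (toItL l) _).trans
        (congrArg HahnSeries.C (toItL_X r l))).trans (if_neg h).symm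

lemma extract_map (f : R →+* S) (k : ℕ → ℕ) :
    ∀ l (x : IterLaurent R l), extract l k (map f l x) = f (extract l k x)
  | 0, _ => rfl
  | l + 1, _ => extract_map f k l _

lemma extract_flatten (k : ℕ → ℕ) : ∀ l (x : IterLaurent (LaurentSeries R) l),
    extract (l + 1) k (flatten l x) = (extract l (fun r => k (r + 1)) x).coeff (k 0 + 1)
  | 0, _ => rfl
  | l + 1, _ => extract_flatten k l _

lemma extractPow_toItL (k : ℕ → ℕ) :
    ∀ l (x : IterLaurent ℚ l), extractPow l k (toItL l x) = extract l k x
  | 0, _ => rfl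
  | l + 1, _ => extractPow_toItL k l _

lemma extract_C_mul (r : R) (k : ℕ → ℕ) :
    ∀ l (x : IterLaurent R l), extract l k (C l r * x) = r * extract l k x
  | 0, _ => rfl
  | l + 1, _ => (congrArg (extract l k) (laurentSeries_coeff_C_mul _ _ _)).trans
      (extract_C_mul r k l _)

lemma isUnit_lastVar (l : ℕ) : IsUnit (lastVar R l) :=
  .of_mul_eq_one (HahnSeries.single (-1 : ℤ) 1 : LaurentSeries (IterLaurent R l)) <|
    (HahnSeries.single_mul_single (R := IterLaurent R l)).trans (by simp; rfl)

lemma isUnit_one_sub_lift_mul_lastVar {l : ℕ} (c : IterLaurent R l) :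
    IsUnit (1 - lift l c * lastVar R l) :=
  isUnit_one_sub_C_mul_single c

lemma isUnit_X {r : ℕ} : ∀ {l}, r < l → IsUnit (X R l r)
  | l + 1, hr => by
    obtain rfl | h := eq_or_ne r l
    · rw [X_self]
      exact isUnit_lastVar r
    · rw [X_of_ne h]
      exact (isUnit_X (by omega)).map _

lemma isUnit_one_sub_C_mul_X (c : R) (r : ℕ) : ∀ l, IsUnit (1 - C l c * X R l r)
  | 0 => by simp [X]
  | l + 1 => by
    obtain rfl | h := eq_or_ne r l
    · rw [X_self]
      exact isUnit_one_sub_lift_mul_lastVar _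
    · simpa [X_of_ne h, C] using (isUnit_one_sub_C_mul_X c r l).map (lift l)

lemma isUnit_one_sub_inverse_X_add_mul_X (c : ℤ) {s t : ℕ} (hst : s < t) :
    ∀ {l}, t < l → IsUnit (1 - (Ring.inverse (X R l s) + c) * X R l t)
  | l + 1, ht => by
    have hX : Ring.inverse (X R (l + 1) s) + (c : IterLaurent R (l + 1)) =
        lift l (Ring.inverse (X R l s) + (c : IterLaurent R l)) := by
      rw [X_of_ne (by omega), map_add, map_intCast, map_ringInverse _ (isUnit_X (by omega))]
    rw [hX]
    obtain rfl | h := eq_or_ne t l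
    · rw [X_self]
      exact isUnit_one_sub_lift_mul_lastVar _
    · simpa [X_of_ne h] using
        (isUnit_one_sub_inverse_X_add_mul_X c hst (l := l) (by omega)).map (lift l)

end IterLaurent

section Residue

open Polynomial

variable {K : Type*} [Field K]

lemma eval_div_eval_nodal {ι : Type*} [DecidableEq ι] {s : Finset ι} {v : ι → K}
    (hv : Set.InjOn v s) {x : K} (hx : ∀ i ∈ s, x ≠ v i) (P : K[X]) :
    P.eval x / (Lagrange.nodal s v).eval x = (P /ₘ Lagrange.nodal s v).eval x +
      ∑ i ∈ s, Lagrange.nodalWeight s v i * (x - v i)⁻¹ * P.eval (v i) := by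
  have hmod : P %ₘ Lagrange.nodal s v = Lagrange.interpolate s v fun i => P.eval (v i) := by
    refine Lagrange.eq_interpolate_of_eval_eq _ hv ?_ fun i hi => ?_
    · exact (degree_modByMonic_lt _ Lagrange.nodal_monic).trans_eq Lagrange.degree_nodal
    · simp [modByMonic_eq_sub_mul_div, Lagrange.eval_nodal_at_node hi]
  have hP : P.eval x = (Lagrange.nodal s v).eval x * _ :=
    calc P.eval x = (P %ₘ Lagrange.nodal s v + Lagrange.nodal s v * (P /ₘ _)).eval x := by
          rw [modByMonic_add_div]
      _ = _ := by
          rw [eval_add, eval_mul, hmod, Lagrange.eval_interpolate_not_at_node _ hx, ← mul_add,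
            add_comm]
  rw [hP, mul_div_cancel_left₀ _ (Lagrange.eval_nodal_not_at_node hx)]

lemma coeff_one_inv_single_sub_C (a : K) :
    ((HahnSeries.single (-1 : ℤ) (1 : K) - HahnSeries.C a)⁻¹ : LaurentSeries K).coeff 1 = 1 := by
  have hg : (1 - PowerSeries.C a * PowerSeries.X) *
      (1 - PowerSeries.C a * PowerSeries.X : PowerSeries K)⁻¹ = 1 :=
    PowerSeries.mul_inv_cancel _ (by simp)
  have hinv : (HahnSeries.single (-1 : ℤ) (1 : K) - HahnSeries.C a)⁻¹ =
      HahnSeries.single (1 : ℤ) 1 *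
        HahnSeries.ofPowerSeries ℤ K (1 - PowerSeries.C a * PowerSeries.X)⁻¹ := by
    refine inv_eq_of_mul_eq_one_right ?_
    rw [← mul_assoc, sub_mul, HahnSeries.single_mul_single, neg_add_cancel, mul_one,
      ← map_one (HahnSeries.ofPowerSeries ℤ K), ← hg, map_mul]
    simp [HahnSeries.ofPowerSeries_C, HahnSeries.ofPowerSeries_X]
  rw [hinv, HahnSeries.coeff_single_mul, one_mul, sub_self, ← Nat.cast_zero,
    HahnSeries.ofPowerSeries_apply_coeff]
  simp

lemma single_neg_one_ne_C (a : K) :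
    (HahnSeries.single (-1 : ℤ) (1 : K) : LaurentSeries K) ≠ HahnSeries.C a := fun h => by
  simpa using congrArg (HahnSeries.coeff · (-1)) h

variable (K) in
/-- The evaluation of a polynomial at the inverse of the variable of the Laurent series field. -/
noncomputable def evalInvVar : K[X] →+* LaurentSeries K :=
  eval₂RingHom HahnSeries.C (HahnSeries.single (-1 : ℤ) 1)

lemma evalInvVar_X : evalInvVar K X = HahnSeries.single (-1 : ℤ) 1 := eval₂_X _ _

lemma evalInvVar_C (a : K) : evalInvVar K (C a) = HahnSeries.C a := eval₂_C _ _

lemma coeff_one_evalInvVar (P : K[X]) : (evalInvVar K P).coeff 1 = 0 := by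
  induction P using Polynomial.induction_on' with
  | add P Q hP hQ => rw [map_add, HahnSeries.coeff_add, hP, hQ, add_zero]
  | monomial m a =>
    rw [← C_mul_X_pow_eq_monomial, map_mul, map_pow, evalInvVar_C, evalInvVar_X,
      laurentSeries_coeff_C_mul, HahnSeries.single_pow,
      HahnSeries.coeff_single_of_ne (by simp; omega), mul_zero]

lemma coeff_one_evalInvVar_div_nodal {ι : Type*} [DecidableEq ι] {s : Finset ι} {v : ι → K}
    (hv : Set.InjOn v s) (P : K[X]) :
    (evalInvVar K P / evalInvVar K (Lagrange.nodal s v)).coeff 1 =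
      ∑ i ∈ s, Lagrange.nodalWeight s v i * P.eval (v i) := by
  have hmap (Q : K[X]) : evalInvVar K Q =
      (Q.map HahnSeries.C).eval (HahnSeries.single (-1 : ℤ) 1) := (eval_map _ _).symm
  have hnodal : (Lagrange.nodal s v).map HahnSeries.C =
      Lagrange.nodal s fun i => (HahnSeries.C (v i) : LaurentSeries K) := by
    simp [Lagrange.nodal, Polynomial.map_prod]
  have hweight (i : ι) : Lagrange.nodalWeight s (fun i => (HahnSeries.C (v i) : LaurentSeries K)) i
      = HahnSeries.C (Lagrange.nodalWeight s v i) := by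
    simp [Lagrange.nodalWeight]
  have hinj : Set.InjOn (fun i => (HahnSeries.C (v i) : LaurentSeries K)) s :=
    fun i hi j hj h => hv hi hj (HahnSeries.C_injective h)
  rw [hmap P, hmap (Lagrange.nodal s v), hnodal,
    eval_div_eval_nodal hinj fun i _ => single_neg_one_ne_C _,
    ← hnodal, ← map_divByMonic _ Lagrange.nodal_monic, ← hmap, HahnSeries.coeff_add,
    coeff_one_evalInvVar, zero_add, HahnSeries.coeff_sum]
  refine Finset.sum_congr rfl fun i _ => ?_
  rw [hweight, mul_assoc, laurentSeries_coeff_C_mul, mul_comm _ (eval _ _), eval_map_apply,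
    laurentSeries_coeff_C_mul, coeff_one_inv_single_sub_C, mul_one]

end Residue

section Integrand

variable {A B : Type*} [CommRing A] [CommRing B] {n : ℕ}

/-- The factor `∏_{j<k} Φ(z,j)` of the integrand, after the product over `j` has been telescoped
and written in terms of the strictly decreasing sequence `ν i = λ_{i+1} + n - 1 - i`. -/
noncomputable def singleFactor (ν : Fin n → ℕ) (k : ℕ) (z : A) : A :=
  (∏ j ∈ Finset.range k, (1 + ((n : ℤ) - j : ℤ) * z)) *
    ∏ i, (1 + ((n : ℤ) - k - ν i : ℤ) * z) * Ring.inverse (1 + ((n : ℤ) - ν i : ℤ) * z)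

/-- The factor of the integrand attached to a pair of variables `z_s, z_t` with `s < t`, where
`u = 1 / z_s`, `z = z_t`, `p = k_s` and `q = k_t`. Being polynomial in `u` coefficientwise in
`z`, it makes sense for values of `u` that are not invertible. -/
noncomputable def interaction (u z : A) (p q : ℕ) : A :=
  (1 - u * z) * (1 - (u + ((q : ℤ) - p : ℤ)) * z) *
    Ring.inverse ((1 - (u + (-p : ℤ)) * z) * (1 - (u + (q : ℤ)) * z))

/-- The function of `z₁, …, z_l` whose iterated coefficient is extracted in the generalized
Frobenius formula. -/
noncomputable def frobeniusIntegrand (ν : Fin n → ℕ) (l : ℕ) (k : ℕ → ℕ) (z : ℕ → A) : A :=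
  (∏ r : Fin l, singleFactor ν (k r) (z r)) *
    ∏ p : Fin l × Fin l with p.1 < p.2,
      interaction (Ring.inverse (z p.1)) (z p.2) (k p.1) (k p.2)

/-- The integrand in `z₁, …, z_l` multiplied by the interactions of these variables with one
further variable `z₀ = 1 / u` of weight `p` that precedes them. -/
noncomputable def coupledIntegrand (ν : Fin n → ℕ) (l : ℕ) (k : ℕ → ℕ) (p : ℕ) (u : A)
    (z : ℕ → A) : A :=
  frobeniusIntegrand ν l k z * ∏ t : Fin l, interaction u (z t) p (k t)

/-- The conditions on `z₁, …, z_l` under which all denominators of the integrand are invertible. -/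
structure IsExpansionPoint (l : ℕ) (z : ℕ → A) : Prop where
  isUnit : ∀ r < l, IsUnit (z r)
  isUnit_one_add : ∀ r < l, ∀ c : ℤ, IsUnit (1 + c * z r)
  isUnit_one_sub : ∀ t < l, ∀ s < t, ∀ c : ℤ, IsUnit (1 - (Ring.inverse (z s) + c) * z t)

lemma frobeniusIntegrand_succ (ν : Fin n → ℕ) (l : ℕ) (k : ℕ → ℕ) (z : ℕ → A) :
    frobeniusIntegrand ν (l + 1) k z = singleFactor ν (k 0) (z 0) *
      coupledIntegrand ν l (fun r => k (r + 1)) (k 0) (Ring.inverse (z 0))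
        fun r => z (r + 1) := by
  simp only [frobeniusIntegrand, coupledIntegrand, Fin.prod_univ_succ, Finset.prod_filter,
    Fintype.prod_prod_type, Fin.val_zero, Fin.val_succ, Fin.succ_lt_succ_iff, Fin.succ_pos,
    Fin.not_lt_zero, if_true, if_false, one_mul]
  ring

section Map

variable (f : A →+* B)

lemma IsExpansionPoint.map {l : ℕ} {z : ℕ → A} (hz : IsExpansionPoint l z) :
    IsExpansionPoint l fun r => f (z r) where
  isUnit r hr := (hz.isUnit r hr).map f
  isUnit_one_add r hr c := by simpa using (hz.isUnit_one_add r hr c).map f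
  isUnit_one_sub t ht s hst c := by
    simpa [map_ringInverse f (hz.isUnit s (hst.trans ht))] using
      (hz.isUnit_one_sub t ht s hst c).map f

lemma map_singleFactor (ν : Fin n → ℕ) (k : ℕ) {z : A} (hz : ∀ c : ℤ, IsUnit (1 + c * z)) :
    f (singleFactor ν k z) = singleFactor ν k (f z) := by
  simp only [singleFactor, map_mul, map_prod, map_ringInverse f (hz _), map_add, map_one,
    map_intCast]

lemma map_interaction (p q : ℕ) {u z : A} (hz : ∀ c : ℤ, IsUnit (1 - (u + c) * z)) :
    f (interaction u z p q) = interaction (f u) (f z) p q := by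
  simp only [interaction, map_mul, map_ringInverse f ((hz _).mul (hz _)), map_add, map_sub,
    map_one, map_intCast]

lemma map_frobeniusIntegrand (ν : Fin n → ℕ) {l : ℕ} (k : ℕ → ℕ) {z : ℕ → A}
    (hz : IsExpansionPoint l z) :
    f (frobeniusIntegrand ν l k z) = frobeniusIntegrand ν l k fun r => f (z r) := by
  rw [frobeniusIntegrand, map_mul, map_prod, map_prod]
  congr 1
  · exact Finset.prod_congr rfl fun r _ => map_singleFactor f ν _ (hz.isUnit_one_add r r.isLt)
  · refine Finset.prod_congr rfl fun p hp => ?_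
    rw [map_interaction f _ _ (hz.isUnit_one_sub p.2 p.2.isLt p.1 (Finset.mem_filter.mp hp).2),
      map_ringInverse f (hz.isUnit _ p.1.isLt)]

lemma map_coupledIntegrand (ν : Fin n → ℕ) {l : ℕ} (k : ℕ → ℕ) (p : ℕ) {u : A} {z : ℕ → A}
    (hz : IsExpansionPoint l z) (hu : ∀ t < l, ∀ c : ℤ, IsUnit (1 - (u + c) * z t)) :
    f (coupledIntegrand ν l k p u z) = coupledIntegrand ν l k p (f u) fun r => f (z r) := by
  rw [coupledIntegrand, map_mul, map_prod, map_frobeniusIntegrand f ν k hz, coupledIntegrand]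
  exact congrArg _ (Finset.prod_congr rfl fun t _ => map_interaction f _ _ (hu t t.isLt))

end Map

lemma mul_inverse_mul_interaction (c : ℤ) (p q : ℕ) {z : A} (hz : ∀ c : ℤ, IsUnit (1 + c * z)) :
    (1 + (c - q : ℤ) * z) * Ring.inverse (1 + c * z) * interaction ((-c : ℤ) : A) z p q =
      (1 + (c + p - q : ℤ) * z) * Ring.inverse (1 + (c + p : ℤ) * z) := by
  have hinteraction : interaction ((-c : ℤ) : A) z p q =
      (1 + c * z) * (1 + (c + p - q : ℤ) * z) *
        Ring.inverse ((1 + (c + p : ℤ) * z) * (1 + (c - q : ℤ) * z)) := by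
    rw [interaction]
    push_cast
    ring_nf
  rw [hinteraction, Ring.inverse_mul (.inl (hz _))]
  linear_combination (1 + (c + p - q : ℤ) * z) * Ring.inverse (1 + (c + p : ℤ) * z) *
    ((1 + (c - q : ℤ) * z) * Ring.inverse (1 + (c - q : ℤ) * z) *
      Ring.inverse_mul_cancel _ (hz c) + Ring.mul_inverse_cancel _ (hz (c - q)))

lemma singleFactor_mul_interaction (ν : Fin n → ℕ) (i : Fin n) {p : ℕ} (hp : p ≤ ν i) (q : ℕ)
    {z : A} (hz : ∀ c : ℤ, IsUnit (1 + c * z)) :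
    singleFactor ν q z * interaction (((ν i : ℤ) - n : ℤ) : A) z p q =
      singleFactor (Function.update ν i (ν i - p)) q z := by
  have hfactor := mul_inverse_mul_interaction ((n : ℤ) - ν i) p q hz
  have herase : ∏ j ∈ Finset.univ.erase i,
        (1 + ((n : ℤ) - q - ν j : ℤ) * z) * Ring.inverse (1 + ((n : ℤ) - ν j : ℤ) * z) =
      ∏ j ∈ Finset.univ.erase i,
        (1 + ((n : ℤ) - q - Function.update ν i (ν i - p) j : ℤ) * z) *
          Ring.inverse (1 + ((n : ℤ) - Function.update ν i (ν i - p) j : ℤ) * z) :=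
    Finset.prod_congr rfl fun j hj => by
      rw [Function.update_of_ne (Finset.ne_of_mem_erase hj)]
  rw [neg_sub, ← sub_right_comm, show (n : ℤ) - ν i + p = n - (ν i - p : ℕ) by omega,
    sub_right_comm _ _ (q : ℤ)] at hfactor
  rw [singleFactor, singleFactor, ← Finset.mul_prod_erase _ _ (Finset.mem_univ i),
    ← Finset.mul_prod_erase _ _ (Finset.mem_univ i), Function.update_self, ← hfactor, herase]
  ring

lemma coupledIntegrand_intCast (ν : Fin n → ℕ) (i : Fin n) {l : ℕ} (k : ℕ → ℕ) {p : ℕ}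
    (hp : p ≤ ν i) {z : ℕ → A} (hz : IsExpansionPoint l z) :
    coupledIntegrand ν l k p (((ν i : ℤ) - n : ℤ) : A) z =
      frobeniusIntegrand (Function.update ν i (ν i - p)) l k z := by
  rw [coupledIntegrand, frobeniusIntegrand, mul_right_comm, ← Finset.prod_mul_distrib,
    frobeniusIntegrand]
  exact congrArg (· * _) (Finset.prod_congr rfl fun t _ =>
    singleFactor_mul_interaction ν i hp _ (hz.isUnit_one_add t t.isLt))

end Integrand

section Recursion

variable {n : ℕ}

lemma singleFactor_eq_pow_mul_div {F : Type*} [Field F] (ν : Fin n → ℕ) (k : ℕ) {z : F}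
    (hz : z ≠ 0) :
    singleFactor ν k z = z ^ k *
      ((∏ j ∈ Finset.range k, (z⁻¹ + ((n : ℤ) - j : ℤ))) * (∏ i, (z⁻¹ + ((n : ℤ) - k - ν i : ℤ))) /
        ∏ i, (z⁻¹ + ((n : ℤ) - ν i : ℤ))) := by
  have hlinear (c : F) : 1 + c * z = z * (z⁻¹ + c) := by
    rw [mul_add, mul_inv_cancel₀ hz, mul_comm c]
  simp only [singleFactor, Ring.inverse_eq_inv', ← div_eq_mul_inv, hlinear, Finset.prod_mul_distrib,
    mul_div_mul_left _ _ hz, Finset.prod_const, Finset.card_range, Finset.prod_div_distrib]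
  ring

variable (K : Type*) [Field K]

/-- The coefficient with which the node `ν i - n` contributes to the residue at infinity of the
integrand in `1 / z₁`. -/
noncomputable def residueCoeff (ν : Fin n → ℕ) (k : ℕ) (i : Fin n) : K :=
  (∏ j ∈ Finset.range k, ((ν i : K) - j)) * (∏ j, ((ν i : K) - k - ν j)) *
    ∏ j ∈ Finset.univ.erase i, ((ν i : K) - ν j)⁻¹

lemma residueCoeff_eq_zero_of_lt {ν : Fin n → ℕ} {k : ℕ} {i : Fin n} (h : ν i < k) :
    residueCoeff K ν k i = 0 := by
  rw [residueCoeff, Finset.prod_eq_zero (Finset.mem_range.mpr h) (sub_self _), zero_mul, zero_mul]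

variable {K}

open Polynomial in
lemma coeff_singleFactor_mul_evalInvVar {ν : Fin n → ℕ} (hν : Function.Injective fun i => (ν i : K))
    (k : ℕ) (P : K[X]) :
    (singleFactor ν k (HahnSeries.single (1 : ℤ) (1 : K)) * evalInvVar K P).coeff (k + 1) =
      ∑ i, residueCoeff K ν k i * P.eval ((ν i - n : ℤ) : K) := by
  set v : Fin n → K := fun i => ((ν i - n : ℤ) : K) with hv
  set Q : K[X] := (∏ j ∈ Finset.range k, ((X : K[X]) + ((n : ℤ) - j : ℤ))) *
    ∏ i, ((X : K[X]) + ((n : ℤ) - k - ν i : ℤ)) with hQ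
  have hinj : Function.Injective v := fun i j h => hν (by simpa [hv] using h)
  have hnodal : evalInvVar K (Lagrange.nodal Finset.univ v) =
      ∏ i, ((HahnSeries.single (-1 : ℤ) 1 : LaurentSeries K) + ((n : ℤ) - ν i : ℤ)) := by
    simp [Lagrange.nodal, evalInvVar_X, hv, sub_eq_add_neg, add_comm]
  have hfactor : singleFactor ν k (HahnSeries.single (1 : ℤ) (1 : K)) =
      HahnSeries.single (k : ℤ) 1 *
        (evalInvVar K Q / evalInvVar K (Lagrange.nodal Finset.univ v)) := by
    rw [singleFactor_eq_pow_mul_div _ _ (HahnSeries.single_ne_zero one_ne_zero), hnodal, hQ]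
    simp [evalInvVar_X]
  have hweight (i : Fin n) :
      residueCoeff K ν k i = Lagrange.nodalWeight Finset.univ v i * Q.eval (v i) := by
    have heval : Q.eval (v i) =
        (∏ j ∈ Finset.range k, ((ν i : K) - j)) * ∏ j, ((ν i : K) - k - ν j) := by
      simp [hQ, hv, eval_prod, sub_sub, ← add_sub_assoc]
    rw [heval, residueCoeff, mul_comm, Lagrange.nodalWeight]
    simp [hv]
  rw [hfactor, mul_assoc, div_mul_eq_mul_div, ← map_mul, add_comm (k : ℤ),
    HahnSeries.coeff_single_mul, add_sub_cancel_right, one_mul,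
    coeff_one_evalInvVar_div_nodal hinj.injOn]
  simp only [eval_mul, ← mul_assoc, hweight, hv]

namespace IterLaurent

variable {R S : Type*} [CommRing R] [CommRing S]

variable (R) in
lemma isExpansionPoint_X (l : ℕ) : IsExpansionPoint l (X R l) where
  isUnit _ hr := isUnit_X hr
  isUnit_one_add r _ c := by simpa using isUnit_one_sub_C_mul_X (-c : R) r l
  isUnit_one_sub _ ht _ hst c := isUnit_one_sub_inverse_X_add_mul_X c hst ht

lemma isUnit_one_sub_C_add_mul_X (a : R) (c : ℤ) (r l : ℕ) :
    IsUnit (1 - (C l a + c) * X R l r) := by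
  simpa using isUnit_one_sub_C_mul_X (a + c) r l

lemma map_coupledIntegrand_X (f : R →+* S) (ν : Fin n → ℕ) (l : ℕ) (k : ℕ → ℕ) (p : ℕ) (a : R) :
    map f l (coupledIntegrand ν l k p (C l a) (X R l)) =
      coupledIntegrand ν l k p (C l (f a)) (X S l) := by
  rw [map_coupledIntegrand _ _ _ _ (isExpansionPoint_X R l)
    fun t _ c => isUnit_one_sub_C_add_mul_X a c t l, map_C]
  simp only [map_X]

lemma isUnit_one_add_intCast_mul_single (c : ℤ) :
    IsUnit (1 + (c : LaurentSeries R) * HahnSeries.single (1 : ℤ) (1 : R)) := by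
  have h := isUnit_one_sub_C_mul_single (-c : R)
  rwa [map_neg, map_intCast, neg_mul, sub_neg_eq_add] at h

lemma frobeniusIntegrand_X_succ (ν : Fin n → ℕ) (l : ℕ) (k : ℕ → ℕ) :
    frobeniusIntegrand ν (l + 1) k (X K (l + 1)) =
      flatten l (C l (singleFactor ν (k 0) (HahnSeries.single (1 : ℤ) 1)) *
        coupledIntegrand ν l (fun r => k (r + 1)) (k 0) (C l (HahnSeries.single (-1 : ℤ) 1))
          (X (LaurentSeries K) l)) := by
  have hinv : (HahnSeries.single (-1 : ℤ) 1 : LaurentSeries K) =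
      Ring.inverse (HahnSeries.single (1 : ℤ) 1) := by
    rw [Ring.inverse_eq_inv', HahnSeries.inv_single, inv_one]
  have hfactor : flatten l (C l (singleFactor ν (k 0) (HahnSeries.single (1 : ℤ) 1))) =
      singleFactor ν (k 0) (X K (l + 1) 0) := by
    rw [← RingHom.comp_apply, map_singleFactor _ _ _ isUnit_one_add_intCast_mul_single,
      RingHom.comp_apply, flatten_C_single]
  have hvar : flatten l (C l (HahnSeries.single (-1 : ℤ) 1)) =
      Ring.inverse (X K (l + 1) 0) := by
    rw [hinv, ← RingHom.comp_apply, map_ringInverse _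
      (HahnSeries.single_ne_zero one_ne_zero).isUnit, RingHom.comp_apply, flatten_C_single]
  rw [map_mul, hfactor, map_coupledIntegrand _ _ _ _ (isExpansionPoint_X _ l)
    fun t _ c => isUnit_one_sub_C_add_mul_X _ c t l, hvar, frobeniusIntegrand_succ]
  simp only [flatten_X]

open Polynomial in
lemma extract_frobeniusIntegrand_succ {ν : Fin n → ℕ} (hν : Function.Injective fun i => (ν i : K))
    (l : ℕ) (k : ℕ → ℕ) :
    extract (l + 1) k (frobeniusIntegrand ν (l + 1) k (X K (l + 1))) =
      ∑ i, residueCoeff K ν (k 0) i * extract l (fun r => k (r + 1))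
        (frobeniusIntegrand (Function.update ν i (ν i - k 0)) l (fun r => k (r + 1)) (X K l)) := by
  rw [frobeniusIntegrand_X_succ, extract_flatten, extract_C_mul, ← evalInvVar_X,
    ← map_coupledIntegrand_X, extract_map, coeff_singleFactor_mul_evalInvVar hν]
  refine Finset.sum_congr rfl fun i _ => ?_
  obtain h | h := lt_or_ge (ν i) (k 0)
  · rw [residueCoeff_eq_zero_of_lt K h, zero_mul, zero_mul]
  · rw [← coe_evalRingHom, ← extract_map, map_coupledIntegrand_X, coe_evalRingHom, eval_X,
      map_intCast, coupledIntegrand_intCast ν i _ h (isExpansionPoint_X K l)]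

end IterLaurent

end Recursion

section Alternant

open MvPolynomial

variable {n : ℕ}

lemma coeff_psum_mul {R : Type*} [CommSemiring R] (m : ℕ) (ν : Fin n → ℕ)
    (P : MvPolynomial (Fin n) R) :
    coeff (Finsupp.equivFunOnFinite.symm ν) (psum (Fin n) R m * P) =
      ∑ i, if m ≤ ν i then
        coeff (Finsupp.equivFunOnFinite.symm (Function.update ν i (ν i - m))) P else 0 := by
  rw [psum, Finset.sum_mul, coeff_sum]
  refine Finset.sum_congr rfl fun i _ => ?_
  have hupdate : Finsupp.equivFunOnFinite.symm ν - Finsupp.single i m =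
      Finsupp.equivFunOnFinite.symm (Function.update ν i (ν i - m)) := by
    ext j
    obtain rfl | h := eq_or_ne j i
    · simp
    · simp [h]
  simp only [X_pow_eq_monomial, coeff_monomial_mul', one_mul, Finsupp.single_le_iff, hupdate,
    Finsupp.equivFunOnFinite_symm_apply_apply]

lemma prod_factorial_mul_multinomial {ι : Type*} [Fintype ι] (d : ι →₀ ℕ) :
    (∏ i, (d i).factorial) * d.multinomial = (∑ i, d i).factorial := by
  rw [Finsupp.multinomial_eq_of_support_subset (Finset.subset_univ d.support),
    Nat.multinomial_spec]

lemma coeff_sum_X_pow_mul_monomial {R : Type*} [CommSemiring R] {N : ℕ} {d e : Fin n →₀ ℕ}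
    (h : ∑ i, d i = N + ∑ i, e i) (c : R) :
    coeff d ((∑ i, X i) ^ N * monomial e c) * ∏ i, ((d i).factorial : R) =
      N.factorial * (c * ∏ i, ((d i).descFactorial (e i) : R)) := by
  rw [coeff_mul_monomial']
  split_ifs with hle
  · have hsum : ∑ i, (d - e) i = N := by
      have : ∑ i, ((d - e) i + e i) = ∑ i, d i :=
        Finset.sum_congr rfl fun i _ => Nat.sub_add_cancel (hle i)
      rw [Finset.sum_add_distrib] at this
      omega
    have hfactorial : ∏ i, ((d i).factorial : R) =
        (∏ i, ((d - e) i).factorial : ℕ) * ∏ i, ((d i).descFactorial (e i) : R) := by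
      rw [Nat.cast_prod, ← Finset.prod_mul_distrib]
      refine Finset.prod_congr rfl fun i _ => ?_
      rw [← Nat.cast_mul, ← Nat.factorial_mul_descFactorial (hle i), Finsupp.tsub_apply]
    have hmultinomial := congrArg (Nat.cast (R := R)) (prod_factorial_mul_multinomial (d - e))
    rw [Nat.cast_mul, hsum] at hmultinomial
    rw [coeff_sum_X_pow_of_fintype, if_pos (by rwa [Finsupp.sum_fintype _ _ fun _ => rfl]),
      hfactorial, ← hmultinomial]
    ring
  · obtain ⟨i, hi⟩ := not_forall.mp hle
    rw [zero_mul, Finset.prod_eq_zero (Finset.mem_univ i), mul_zero, mul_zero]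
    rw [Nat.descFactorial_of_lt (not_le.mp hi), Nat.cast_zero]

/-- The alternant `a_δ = ∑_w sgn(w) x^{wδ}`, as a determinant. -/
noncomputable def alternant (n : ℕ) : MvPolynomial (Fin n) ℤ :=
  Matrix.det (Matrix.of fun i j : Fin n => X j ^ (n - 1 - (i : ℕ)))

lemma alternant_eq_sum (n : ℕ) :
    alternant n = ∑ w : Equiv.Perm (Fin n),
      C ((Equiv.Perm.sign w : ℤ)) * ∏ i, X i ^ (n - 1 - (w i : ℕ)) := by
  simp [alternant, Matrix.det_apply']

lemma rename_alternant (w : Equiv.Perm (Fin n)) :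
    rename w (alternant n) = (Equiv.Perm.sign w : ℤ) * alternant n := by
  rw [alternant, AlgHom.map_det, ← Matrix.det_permute']
  congr 1
  ext : 2
  simp

/-- The coefficient of `x^ν` in `p_m a_δ`, where `p_m` is the power sum symmetric polynomial. -/
noncomputable def alternantCoeff (ν : Fin n → ℕ) (m : Multiset ℕ) : ℤ :=
  coeff (Finsupp.equivFunOnFinite.symm ν) ((m.map (psum (Fin n) ℤ)).prod * alternant n)

lemma alternantCoeff_cons (ν : Fin n → ℕ) (a : ℕ) (m : Multiset ℕ) :
    alternantCoeff ν (a ::ₘ m) =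
      ∑ i, if a ≤ ν i then alternantCoeff (Function.update ν i (ν i - a)) m else 0 := by
  rw [alternantCoeff, Multiset.map_cons, Multiset.prod_cons, mul_assoc, coeff_psum_mul]
  rfl

lemma alternantCoeff_of_not_injective {ν : Fin n → ℕ} (hν : ¬ Function.Injective ν)
    (m : Multiset ℕ) : alternantCoeff ν m = 0 := by
  obtain ⟨a, b, hab, hne⟩ := Function.not_injective_iff.mp hν
  have hrename : rename (Equiv.swap a b) ((m.map (psum (Fin n) ℤ)).prod * alternant n) =
      -((m.map (psum (Fin n) ℤ)).prod * alternant n) := by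
    rw [map_mul, map_multiset_prod, Multiset.map_map, rename_alternant,
      Equiv.Perm.sign_swap hne]
    simp
  have hfixed : (Finsupp.equivFunOnFinite.symm ν).mapDomain (Equiv.swap a b) =
      Finsupp.equivFunOnFinite.symm ν := by
    ext j
    rw [Finsupp.mapDomain_equiv_apply, Equiv.symm_swap]
    exact Equiv.apply_swap_eq_self hab j
  have h := coeff_rename_mapDomain _ (Equiv.swap a b).injective
    ((m.map (psum (Fin n) ℤ)).prod * alternant n) (Finsupp.equivFunOnFinite.symm ν)
  rw [hrename, hfixed, coeff_neg] at h
  exact self_eq_neg.mp h.symm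

lemma alternantCoeff_replicate_one_mul (ν : Fin n → ℕ) {N : ℕ}
    (h : ∑ i, ν i = N + ∑ i : Fin n, (i : ℕ)) :
    alternantCoeff ν (Multiset.replicate N 1) * ∏ i, ((ν i).factorial : ℤ) =
      N.factorial * Matrix.det
        (Matrix.of fun i j : Fin n => ((ν j).descFactorial (n - 1 - i) : ℤ)) := by
  have hmonomial (w : Equiv.Perm (Fin n)) :
      C ((Equiv.Perm.sign w : ℤ)) * ∏ i, X i ^ (n - 1 - (w i : ℕ)) =
        monomial (Finsupp.equivFunOnFinite.symm fun i : Fin n => n - 1 - (w i : ℕ))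
          (Equiv.Perm.sign w : ℤ) := by
    rw [monomial_eq, Finsupp.prod_fintype _ _ fun _ => pow_zero _]
    rfl
  have hsum (w : Equiv.Perm (Fin n)) :
      ∑ i, (n - 1 - (w i : ℕ)) = ∑ i : Fin n, (i : ℕ) := by
    rw [← Equiv.sum_comp (w.trans Fin.revPerm) fun i : Fin n => (i : ℕ)]
    exact Finset.sum_congr rfl fun i _ => by simp [Fin.val_rev, Nat.sub_sub, add_comm]
  rw [alternantCoeff, Multiset.map_replicate, Multiset.prod_replicate, psum_one, alternant_eq_sum,
    Finset.mul_sum, coeff_sum, Finset.sum_mul, Matrix.det_apply', Finset.mul_sum]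
  refine Finset.sum_congr rfl fun w _ => ?_
  rw [hmonomial]
  exact coeff_sum_X_pow_mul_monomial (by simpa [hsum w] using h) _

end Alternant

section DimDensity

variable {n : ℕ}

open Polynomial in
lemma det_vandermonde_update {K : Type*} [Field K] {v : Fin n → K} (hv : Function.Injective v)
    (i : Fin n) (x : K) :
    (Matrix.vandermonde (Function.update v i x)).det =
      (∏ j ∈ Finset.univ.erase i, (x - v j) * (v i - v j)⁻¹) * (Matrix.vandermonde v).det := by
  have hpow (j : Fin n) : x ^ (j : ℕ) =
      ∑ m, (Lagrange.basis Finset.univ v m).eval x * v m ^ (j : ℕ) := by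
    have hinterpolate := Lagrange.eq_interpolate (f := (X ^ (j : ℕ) : K[X])) (s := Finset.univ)
      hv.injOn (by simp)
    simpa [Lagrange.interpolate_apply, eval_finsetSum, mul_comm] using
      congrArg (eval x) hinterpolate
  have hrow : Matrix.vandermonde (Function.update v i x) =
      (Matrix.vandermonde v).updateRow i
        (∑ m, (Lagrange.basis Finset.univ v m).eval x • Matrix.vandermonde v m) := by
    ext a b
    obtain rfl | h := eq_or_ne a i
    · simp [Matrix.vandermonde_apply, hpow b, Finset.sum_apply]
    · simp [Matrix.vandermonde_apply, h]
  rw [hrow, Matrix.det_updateRow_sum, smul_eq_mul, Lagrange.basis, eval_prod]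
  simp [Lagrange.basisDivisor, mul_comm]

/-- The ratio `f^λ / n! = ∏_{i<j} (ν i - ν j) / ∏_i (ν i)!`, where `f^λ` is the dimension of the
representation indexed by `λ` and `ν i = λ_{i+1} + n - 1 - i`. The Vandermonde determinant of `ν`
being `∏_{i<j} (ν j - ν i)`, it is corrected by the sign of the reversal of `Fin n`. -/
noncomputable def dimDensity (ν : Fin n → ℕ) : ℚ :=
  (Equiv.Perm.sign (Fin.revPerm (n := n)) : ℤ) * (Matrix.vandermonde fun i => (ν i : ℚ)).det /
    ∏ i, ((ν i).factorial : ℚ)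

lemma prod_factorial_ne_zero (ν : Fin n → ℕ) : ∏ i, ((ν i).factorial : ℚ) ≠ 0 :=
  Finset.prod_ne_zero_iff.mpr fun i _ => Nat.cast_ne_zero.mpr (ν i).factorial_ne_zero

lemma dimDensity_ne_zero_iff {ν : Fin n → ℕ} : dimDensity ν ≠ 0 ↔ Function.Injective ν := by
  rw [dimDensity, div_ne_zero_iff, and_iff_left (prod_factorial_ne_zero ν), mul_ne_zero_iff,
    and_iff_right (by simp), Matrix.det_vandermonde_ne_zero_iff]
  exact Nat.cast_injective.of_comp_iff ν

lemma det_descFactorial {R : Type*} [CommRing R] [Nontrivial R] [NoZeroDivisors R] (ν : Fin n → ℕ) :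
    (Matrix.of fun i j : Fin n => ((ν j).descFactorial (n - 1 - i) : R)).det =
      (Equiv.Perm.sign (Fin.revPerm (n := n)) : ℤ) *
        (Matrix.vandermonde fun i => (ν i : R)).det := by
  rw [Matrix.det_eval_matrixOfPolynomials_eq_det_vandermonde (fun i => (ν i : R))
    (fun j => descPochhammer R j) (fun _ => descPochhammer_natDegree _ _)
    fun _ => monic_descPochhammer _ _, ← Matrix.det_permute', ← Matrix.det_transpose]
  congr 1
  ext i j
  simp [descPochhammer_eval_eq_descFactorial, Fin.val_rev, Nat.sub_sub, add_comm]

lemma alternantCoeff_replicate_one (ν : Fin n → ℕ) {N : ℕ}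
    (h : ∑ i, ν i = N + ∑ i : Fin n, (i : ℕ)) :
    (alternantCoeff ν (Multiset.replicate N 1) : ℚ) = N.factorial * dimDensity ν := by
  have hdet := congrArg (Int.castRingHom ℚ) (alternantCoeff_replicate_one_mul ν h)
  have hmatrix : (Int.castRingHom ℚ).mapMatrix
      (Matrix.of fun i j : Fin n => ((ν j).descFactorial (n - 1 - i) : ℤ)) =
      Matrix.of fun i j : Fin n => ((ν j).descFactorial (n - 1 - i) : ℚ) := by
    ext
    simp
  rw [map_mul, map_mul, map_prod, RingHom.map_det, hmatrix, det_descFactorial] at hdet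
  rw [dimDensity, mul_div_assoc', eq_div_iff (prod_factorial_ne_zero ν)]
  simpa using hdet

lemma dimDensity_mul_residueCoeff {ν : Fin n → ℕ} (hν : Function.Injective ν) {k : ℕ} {i : Fin n}
    (hk : k ≤ ν i) :
    dimDensity ν * residueCoeff ℚ ν k i = -k * dimDensity (Function.update ν i (ν i - k)) := by
  have hcast : (fun j => ((Function.update ν i (ν i - k) j : ℕ) : ℚ)) =
      Function.update (fun j => (ν j : ℚ)) i ((ν i : ℚ) - k) := by
    rw [← Nat.cast_sub hk]
    exact Function.comp_update _ _ _ _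
  have hdet : (Matrix.vandermonde fun j => ((Function.update ν i (ν i - k) j : ℕ) : ℚ)).det =
      (∏ j ∈ Finset.univ.erase i, ((ν i - k : ℚ) - ν j) * ((ν i : ℚ) - ν j)⁻¹) *
        (Matrix.vandermonde fun j => (ν j : ℚ)).det := by
    rw [hcast]
    exact det_vandermonde_update (Nat.cast_injective.comp hν) i _
  have hfactorial : (∏ j, ((Function.update ν i (ν i - k) j).factorial : ℚ)) *
      ∏ j ∈ Finset.range k, ((ν i : ℚ) - j) = ∏ j, ((ν j).factorial : ℚ) := by
    rw [← descPochhammer_eval_eq_prod_range, descPochhammer_eval_eq_descFactorial,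
      ← Finset.mul_prod_erase _ _ (Finset.mem_univ i),
      ← Finset.mul_prod_erase _ _ (Finset.mem_univ i), Function.update_self, mul_right_comm,
      ← Nat.cast_mul, Nat.factorial_mul_descFactorial hk]
    refine congrArg _ (Finset.prod_congr rfl fun j hj => ?_)
    rw [Function.update_of_ne (Finset.ne_of_mem_erase hj)]
  have hupdate := prod_factorial_ne_zero (Function.update ν i (ν i - k))
  have hrange : ∏ j ∈ Finset.range k, ((ν i : ℚ) - j) ≠ 0 :=
    right_ne_zero_of_mul (hfactorial.trans_ne (prod_factorial_ne_zero ν))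
  have hdiag : ∏ j, ((ν i : ℚ) - k - ν j) =
      -k * ∏ j ∈ Finset.univ.erase i, ((ν i : ℚ) - k - ν j) := by
    rw [← Finset.mul_prod_erase _ _ (Finset.mem_univ i), sub_sub_cancel_left]
  rw [dimDensity, dimDensity, hdet, residueCoeff, ← hfactorial, hdiag, Finset.prod_mul_distrib]
  field_simp

end DimDensity

section Induction

variable {n : ℕ}

/-- The iterated coefficient `[z₁^{k₁+1}] ⋯ [z_l^{k_l+1}]` of the integrand of the generalized
Frobenius formula, computed over `ℚ`. -/
noncomputable def frobeniusCoeff (ν : Fin n → ℕ) (l : ℕ) (k : ℕ → ℕ) : ℚ :=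
  IterLaurent.extract l k (frobeniusIntegrand ν l k (IterLaurent.X ℚ l))

lemma frobeniusCoeff_zero (ν : Fin n → ℕ) (k : ℕ → ℕ) : frobeniusCoeff ν 0 k = 1 := by
  rw [frobeniusCoeff, show frobeniusIntegrand ν 0 k (IterLaurent.X ℚ 0) = 1 by
    simp [frobeniusIntegrand]]
  rfl

lemma dimDensity_mul_frobeniusCoeff_succ {ν : Fin n → ℕ} (hν : Function.Injective ν) (l : ℕ)
    (k : ℕ → ℕ) :
    dimDensity ν * frobeniusCoeff ν (l + 1) k =
      -k 0 * ∑ i, if k 0 ≤ ν i then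
        dimDensity (Function.update ν i (ν i - k 0)) *
          frobeniusCoeff (Function.update ν i (ν i - k 0)) l (fun r => k (r + 1)) else 0 := by
  rw [frobeniusCoeff,
    IterLaurent.extract_frobeniusIntegrand_succ (Nat.cast_injective.comp hν), Finset.mul_sum,
    Finset.mul_sum]
  refine Finset.sum_congr rfl fun i _ => ?_
  split_ifs with hk
  · rw [← mul_assoc, dimDensity_mul_residueCoeff hν hk, mul_assoc, frobeniusCoeff]
  · rw [residueCoeff_eq_zero_of_lt ℚ (not_le.mp hk), zero_mul, mul_zero, mul_zero]

lemma sum_update_sub_add {ι : Type*} [Fintype ι] [DecidableEq ι] (ν : ι → ℕ) {i : ι} {a : ℕ}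
    (ha : a ≤ ν i) : ∑ j, Function.update ν i (ν i - a) j + a = ∑ j, ν j := by
  rw [Finset.sum_update_of_mem (Finset.mem_univ i), add_right_comm, Nat.sub_add_cancel ha,
    ← Finset.erase_eq, Finset.add_sum_erase _ _ (Finset.mem_univ i)]

lemma multiset_map_fin_succ {α : Type*} (l : ℕ) (k : ℕ → α) :
    Multiset.map (fun r : Fin (l + 1) => k r) Finset.univ.val =
      k 0 ::ₘ Multiset.map (fun r : Fin l => k (r + 1)) Finset.univ.val := by
  simp [Fin.univ_succ, Function.comp_def]

lemma factorial_mul_dimDensity_mul_frobeniusCoeff {N : ℕ} (l : ℕ) (ν : Fin n → ℕ) (k : ℕ → ℕ)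
    (h : ∑ i, ν i = ∑ r : Fin l, k r + N + ∑ i : Fin n, (i : ℕ)) :
    N.factorial * (dimDensity ν * frobeniusCoeff ν l k) =
      (-1) ^ l * (∏ r : Fin l, (k r : ℚ)) *
        alternantCoeff ν (Multiset.map (fun r : Fin l => k r) Finset.univ.val +
          Multiset.replicate N 1) := by
  induction l generalizing ν k with
  | zero =>
    rw [frobeniusCoeff_zero, mul_one, ← alternantCoeff_replicate_one ν (by simpa using h)]
    simp
  | succ l ih =>
    by_cases hν : Function.Injective ν
    · rw [Fin.sum_univ_succ] at h
      rw [dimDensity_mul_frobeniusCoeff_succ hν, mul_left_comm, Finset.mul_sum,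
        multiset_map_fin_succ, Multiset.cons_add, alternantCoeff_cons, Fin.prod_univ_succ,
        Int.cast_sum, Finset.mul_sum, Finset.mul_sum]
      refine Finset.sum_congr rfl fun i _ => ?_
      split_ifs with hk
      · have hsum := sum_update_sub_add ν hk
        simp only [Fin.val_zero, Fin.val_succ] at h ⊢
        rw [ih _ _ (by omega)]
        ring
      · simp
    · rw [not_ne_iff.mp (mt dimDensity_ne_zero_iff.mp hν), alternantCoeff_of_not_injective hν]
      simp

lemma sum_fin_le_sum {ν : Fin n → ℕ} (hν : Function.Injective ν) :
    ∑ i : Fin n, (i : ℕ) ≤ ∑ i, ν i := by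
  have hcast : Function.Injective fun i => (ν i : ℤ) := Nat.cast_injective.comp hν
  have h := Finset.sum_range_le_sum (s := Finset.univ.image fun i => (ν i : ℤ)) (c := 0)
    (by simp)
  rw [Finset.card_image_of_injective _ hcast, Finset.sum_image hcast.injOn, Finset.card_univ,
    Fintype.card_fin] at h
  simp only [zero_add] at h
  rw [Fin.sum_univ_eq_sum_range fun i => i]
  zify
  exact h

lemma dimDensity_mul_frobeniusCoeff_eq_zero (l : ℕ) (ν : Fin n → ℕ) (k : ℕ → ℕ)
    (h : ∑ i, ν i < ∑ r : Fin l, k r + ∑ i : Fin n, (i : ℕ)) :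
    dimDensity ν * frobeniusCoeff ν l k = 0 := by
  induction l generalizing ν k with
  | zero =>
    have hν : ¬ Function.Injective ν := fun hν =>
      (sum_fin_le_sum hν).not_gt (by simpa using h)
    rw [not_ne_iff.mp (mt dimDensity_ne_zero_iff.mp hν), zero_mul]
  | succ l ih =>
    by_cases hν : Function.Injective ν
    · rw [Fin.sum_univ_succ] at h
      rw [dimDensity_mul_frobeniusCoeff_succ hν, Finset.sum_eq_zero, mul_zero]
      intro i _
      split_ifs with hk
      · have hsum := sum_update_sub_add ν hk
        simp only [Fin.val_zero, Fin.val_succ] at h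
        exact ih _ _ (by omega)
      · rfl
    · rw [not_ne_iff.mp (mt dimDensity_ne_zero_iff.mp hν), zero_mul]

end Induction

section Character

variable {n : ℕ}

/-- The sequence `λ + δ`, strictly decreasing when `λ` is a partition. -/
def shiftedParts (lam : Fin n → ℕ) (i : Fin n) : ℕ :=
  lam i + (n - 1 - i)

lemma shiftedParts_injective {lam : Fin n → ℕ} (hanti : Antitone lam) :
    Function.Injective (shiftedParts lam) := by
  refine StrictAnti.injective fun i j hij => ?_
  have hle := hanti hij.le
  simp only [shiftedParts]
  omega

lemma sum_shiftedParts (lam : Fin n → ℕ) :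
    ∑ i, shiftedParts lam i = ∑ i, lam i + ∑ i : Fin n, (i : ℕ) := by
  simp only [shiftedParts]
  rw [Finset.sum_add_distrib, ← Equiv.sum_comp Fin.revPerm fun i : Fin n => (i : ℕ)]
  congr! 2 with i
  simp [Fin.val_rev, Nat.sub_sub, add_comm]

lemma frobChar_eq_alternantCoeff (lam : Fin n → ℕ) (m : Multiset ℕ) :
    frobChar n lam m = alternantCoeff (shiftedParts lam) m := by
  rw [alternantCoeff, alternant_eq_sum]
  rfl

lemma neg_one_pow_mul_prod_mul_sigmaChar {lam : Fin n → ℕ}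
    (hinj : Function.Injective (shiftedParts lam)) (hsum : ∑ i, lam i = n) (l : ℕ) (k : ℕ → ℕ) :
    (-1 : ℚ) ^ l * (∏ r : Fin l, (k r : ℚ)) *
        SigmaChar n lam (Multiset.map (fun r : Fin l => k r) Finset.univ.val) =
      frobeniusCoeff (shiftedParts lam) l k := by
  have hdim := dimDensity_ne_zero_iff.mpr hinj
  have hshifted := sum_shiftedParts lam
  have hweight : (Multiset.map (fun r : Fin l => k r) Finset.univ.val).sum = ∑ r : Fin l, k r :=
    rfl
  rw [SigmaChar, hweight]
  split_ifs with hle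
  · have hcoeff := factorial_mul_dimDensity_mul_frobeniusCoeff (N := n - ∑ r : Fin l, k r) l
      (shiftedParts lam) k (by omega)
    have hfactorial : (n.factorial : ℚ) =
        (n - ∑ r : Fin l, k r).factorial * n.descFactorial (∑ r : Fin l, k r) := by
      exact_mod_cast (Nat.factorial_mul_descFactorial hle).symm
    have hn : (n.factorial : ℚ) ≠ 0 := Nat.cast_ne_zero.mpr n.factorial_ne_zero
    rw [frobChar_eq_alternantCoeff, frobChar_eq_alternantCoeff,
      alternantCoeff_replicate_one _ (by omega), mul_div_assoc',
      div_eq_iff (mul_ne_zero hn hdim), hfactorial]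
    linear_combination -(n.descFactorial (∑ r : Fin l, k r) : ℚ) * hcoeff
  · have hcoeff := dimDensity_mul_frobeniusCoeff_eq_zero l (shiftedParts lam) k (by omega)
    rw [mul_zero, (mul_eq_zero.mp hcoeff).resolve_left hdim]

end Character

section IteratedLaurent

variable {n : ℕ}

lemma isExpansionPoint_wVar (l : ℕ) : IsExpansionPoint l (wVar l) := by
  simpa only [IterLaurent.toItL_X] using
    (IterLaurent.isExpansionPoint_X ℚ l).map (IterLaurent.toItL l)

lemma extractPow_frobeniusIntegrand (ν : Fin n → ℕ) (l : ℕ) (k : ℕ → ℕ) :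
    extractPow l k (frobeniusIntegrand ν l k (wVar l)) = frobeniusCoeff ν l k := by
  rw [frobeniusCoeff, ← IterLaurent.extractPow_toItL,
    map_frobeniusIntegrand _ _ _ (IterLaurent.isExpansionPoint_X ℚ l)]
  simp only [IterLaurent.toItL_X]

end IteratedLaurent

section Field

variable {F : Type} [Field F] {n : ℕ}

lemma PhiOf_eq_mul_div (lam : Fin n → ℕ) (j : ℕ) {z : F} (hz : z ≠ 0) (hj : 1 - j * z ≠ 0) :
    PhiOf n lam z j = z * (z⁻¹ + ((n : ℤ) - j : ℤ)) *
      ((∏ i, (z⁻¹ + ((n : ℤ) - (j + 1 : ℕ) - shiftedParts lam i : ℤ))) /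
        ∏ i, (z⁻¹ + ((n : ℤ) - j - shiftedParts lam i : ℤ))) := by
  have hinv : (z / (1 - j * z))⁻¹ = z⁻¹ - j := by
    rw [inv_div, sub_div, one_div, mul_div_cancel_right₀ _ hz]
  have hnum (i : Fin n) : z⁻¹ - j - lam i + (i : ℕ) =
      z⁻¹ + ((n : ℤ) - (j + 1 : ℕ) - shiftedParts lam i : ℤ) := by
    rw [shiftedParts, show (n : ℤ) - (j + 1 : ℕ) - (lam i + (n - 1 - i) : ℕ) = -j - lam i + i by
      omega]
    push_cast
    ring
  have hden (i : Fin n) : z⁻¹ - j - lam i + (i : ℕ) + 1 =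
      z⁻¹ + ((n : ℤ) - j - shiftedParts lam i : ℤ) := by
    rw [hnum]
    push_cast
    ring
  rw [PhiOf, phiOf, Hof, hinv, ← mul_assoc, mul_div_cancel₀ _ hj]
  simp_rw [hden, hnum]
  push_cast
  ring

lemma singleFactor_eq_prod_PhiOf (lam : Fin n → ℕ) (k : ℕ) {z : F} (hz : z ≠ 0)
    (hc : ∀ c : ℤ, 1 + c * z ≠ 0) :
    singleFactor (shiftedParts lam) k z = ∏ j ∈ Finset.range k, PhiOf n lam z j := by
  have hden (j : ℕ) : ∏ i, (z⁻¹ + ((n : ℤ) - j - shiftedParts lam i : ℤ)) ≠ 0 :=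
    Finset.prod_ne_zero_iff.mpr fun i _ h =>
      hc ((n : ℤ) - j - shiftedParts lam i)
        (by rw [← mul_inv_cancel₀ hz, mul_comm (Int.cast _), ← mul_add, h, mul_zero])
  have htelescope : ∏ j ∈ Finset.range k,
      (∏ i, (z⁻¹ + ((n : ℤ) - (j + 1 : ℕ) - shiftedParts lam i : ℤ))) /
        ∏ i, (z⁻¹ + ((n : ℤ) - j - shiftedParts lam i : ℤ)) =
      (∏ i, (z⁻¹ + ((n : ℤ) - k - shiftedParts lam i : ℤ))) /
        ∏ i, (z⁻¹ + ((n : ℤ) - shiftedParts lam i : ℤ)) := by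
    induction k with
    | zero => simpa using (div_self (hden 0)).symm
    | succ k ih => rw [Finset.prod_range_succ, ih, mul_comm, div_mul_div_cancel₀ (hden k)]
  have hsub (j : ℕ) : 1 - j * z ≠ 0 := by simpa [← sub_eq_add_neg] using hc (-j)
  rw [Finset.prod_congr rfl fun j _ => PhiOf_eq_mul_div lam j hz (hsub j),
    Finset.prod_mul_distrib, Finset.prod_mul_distrib, Finset.prod_const, Finset.card_range,
    htelescope, singleFactor_eq_pow_mul_div _ _ hz, mul_div_assoc, mul_assoc]

lemma interaction_inverse_eq_div {x : F} (hx : x ≠ 0) (z : F) (p q : ℕ) :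
    interaction (Ring.inverse x) z p q =
      (z - x) * (z - x + ((q : F) - p) * x * z) /
        ((z - x - p * x * z) * (z - x + q * x * z)) := by
  have hfactor (c : F) : z - x + c * x * z = -x * (1 - (x⁻¹ + c) * z) := by
    field_simp
    ring
  have hzero : z - x = -x * (1 - x⁻¹ * z) := by simpa using hfactor 0
  have hneg : z - x - p * x * z = -x * (1 - (x⁻¹ + -p) * z) := by
    rw [← hfactor, neg_mul, neg_mul, sub_eq_add_neg]
  rw [hfactor, hfactor, hneg, hzero, ← div_mul_div_comm, mul_div_mul_left _ _ (neg_ne_zero.mpr hx),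
    mul_div_mul_left _ _ (neg_ne_zero.mpr hx), div_mul_div_comm, div_eq_mul_inv, interaction,
    Ring.inverse_eq_inv']
  push_cast
  rfl

end Field

theorem generalized_frobenius_formula_kerov_form_general (n : ℕ) (lam : Fin n → ℕ)
    (hinj : Function.Injective (shiftedParts lam))
    (hsum : ∑ i, lam i = n)
    (l : ℕ) (k : ℕ → ℕ) :
    (-1 : ℚ) ^ l * (∏ r : Fin l, (k (r : ℕ) : ℚ)) *
        SigmaChar n lam (Multiset.map (fun r : Fin l => k (r : ℕ)) Finset.univ.val) =
      extractPow l k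
        ((∏ r : Fin l, ∏ j ∈ Finset.range (k (r : ℕ)),
            PhiOf n lam (wVar l r) (j : ItLT l)) *
          ∏ p ∈ Finset.univ.filter (fun p : Fin l × Fin l => p.1 < p.2),
            ((wVar l p.2 - wVar l p.1) *
                (wVar l p.2 - wVar l p.1 +
                  ((k (p.2 : ℕ) : ItLT l) - (k (p.1 : ℕ) : ItLT l)) *
                    wVar l p.1 * wVar l p.2)) /
              ((wVar l p.2 - wVar l p.1 -
                  (k (p.1 : ℕ) : ItLT l) * wVar l p.1 * wVar l p.2) *
                (wVar l p.2 - wVar l p.1 +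
                  (k (p.2 : ℕ) : ItLT l) * wVar l p.1 * wVar l p.2))) := by
  have hz := isExpansionPoint_wVar l
  rw [neg_one_pow_mul_prod_mul_sigmaChar hinj hsum, ← extractPow_frobeniusIntegrand,
    frobeniusIntegrand]
  congr 2
  · exact Finset.prod_congr rfl fun r _ => singleFactor_eq_prod_PhiOf lam _
      (hz.isUnit r r.isLt).ne_zero fun c => (hz.isUnit_one_add r r.isLt c).ne_zero
  · exact Finset.prod_congr rfl fun p _ =>
      interaction_inverse_eq_div (hz.isUnit p.1 p.1.isLt).ne_zero _ _ _

/-- generalized Frobenius formula in the variables `z_r ↦ 1/z_r`, the form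
used for generalized Kerov polynomials: `(-1)^l k₁⋯k_l Σ^λ_{k₁,…,k_l} =
[z₁^{k₁+1}]⋯[z_l^{k_l+1}] [∏_r ∏_{j=0}^{k_r-1} Φ(z_r,j) ⋅
∏_{s<t} (z_t-z_s)(z_t-z_s+(k_t-k_s)z_sz_t) / ((z_t-z_s-k_s z_s z_t)(z_t-z_s+k_t z_s z_t))]`,
where `k r` stands for `k_{r+1}`. -/
theorem generalized_frobenius_formula_kerov_form (n : ℕ) (lam : Fin n → ℕ)
    (hanti : ∀ i j : Fin n, i ≤ j → lam j ≤ lam i)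
    (hsum : ∑ i, lam i = n)
    (l : ℕ) (k : ℕ → ℕ) (hk : ∀ r < l, 1 ≤ k r) :
    (-1 : ℚ) ^ l * (∏ r : Fin l, (k (r : ℕ) : ℚ)) *
        SigmaChar n lam (Multiset.map (fun r : Fin l => k (r : ℕ)) Finset.univ.val) =
      extractPow l k
        ((∏ r : Fin l, ∏ j ∈ Finset.range (k (r : ℕ)),
            PhiOf n lam (wVar l r) (j : ItLT l)) *
          ∏ p ∈ Finset.univ.filter (fun p : Fin l × Fin l => p.1 < p.2),
            ((wVar l p.2 - wVar l p.1) *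
                (wVar l p.2 - wVar l p.1 +
                  ((k (p.2 : ℕ) : ItLT l) - (k (p.1 : ℕ) : ItLT l)) *
                    wVar l p.1 * wVar l p.2)) /
              ((wVar l p.2 - wVar l p.1 -
                  (k (p.1 : ℕ) : ItLT l) * wVar l p.1 * wVar l p.2) *
                (wVar l p.2 - wVar l p.1 +
                  (k (p.2 : ℕ) : ItLT l) * wVar l p.1 * wVar l p.2))) :=
  generalized_frobenius_formula_kerov_form_general n lam
    (shiftedParts_injective fun i j => hanti i j) hsum l k
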